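/- (Theorem on the first derivation deviation) In the endomorphism operad of a K-module L, the derivation deviation of the coboundary operator over the total composition, (dev_• ∂)(f ⊗ g) := ∂(f • g) − f • ∂g − (−1)^{|g|} ∂f • g, satisfies (−1)^n (dev_• ∂)(f ⊗ g) = f ⌣ g − (−1)^{mn} g ⌣ f for all homogeneous f ∈ E^m and g ∈ E^n. -/

import Mathlib

/-!
Write `A(F; G, H) := (F • G) • H - F • (G • H)` for the associator of the total composition.
Sequential compositions cancel in it, so only insertions of `G` and `H` into two different slots
of `F` survive, and the parallel composition law makes what is left graded symmetric: with
`P(F; G, H) := ∑ i, ∑ j < i, (F ∘ᵢ G) ∘ⱼ H`, one has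
`A(F; G, H) = P(F; G, H) + (-1)^{|G||H|} P(F; H, G)` (`associator_eq`), hence the
pre-Lie identity `A(F; G, H) = (-1)^{|G||H|} A(F; H, G)`.

Expanding the brackets in the derivation deviation of `∂`, the pre-Lie identity for `(f; g, μ)`
cancels every term in which `f` is outermost, and what remains is `± A(μ; f, g)`. Since `μ` has only
two slots, `P(μ; f, g)` and `P(μ; g, f)` are single terms, and they are the two cup products.
-/

variable {K : Type*} [CommRing K] {L : Type*} [AddCommGroup L] [Module K L]

/-- `(-1)^z` for an integer exponent `z`. -/
def sgn (z : ℤ) : ℤ := (-1) ^ z.natAbs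

/-- The underlying function (on `ℕ`-indexed families of elements of `L`) of an
`n`-multilinear map `f ∈ Eⁿ`; equality of such functions is equivalent to equality
of the multilinear maps. -/
def toFn {n : ℕ} (f : MultilinearMap K (fun _ : Fin n => L) L) : (ℕ → L) → L :=
  fun x => f fun a => x a.val

/-- Partial composition `F ∘ᵢ G`, where `n` is the arity (degree) of `G`:
`(f ∘ᵢ g)(x_0, …) = (-1)^{i(n-1)} f(x_0, …, x_{i-1}, g(x_i, …, x_{i+n-1}), x_{i+n}, …)`. -/
def pcomp (i n : ℕ) (F G : (ℕ → L) → L) : (ℕ → L) → L :=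
  fun x => sgn ((i : ℤ) * ((n : ℤ) - 1)) •
    F fun k => if k < i then x k else if k = i then G (fun j => x (i + j)) else x (k + n - 1)

/-- Total composition `F • G := Σ_{i=0}^{m-1} F ∘ᵢ G`, where `m, n` are the arities of `F, G`. -/
def tcomp (m n : ℕ) (F G : (ℕ → L) → L) : (ℕ → L) → L :=
  ∑ i ∈ Finset.range m, pcomp i n F G

/-- Gerstenhaber bracket `[F, G] := F • G - (-1)^{|F||G|} G • F` for arities `m, n` of `F, G`. -/
def gbr (m n : ℕ) (F G : (ℕ → L) → L) : (ℕ → L) → L :=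
  tcomp m n F G - sgn (((m : ℤ) - 1) * ((n : ℤ) - 1)) • tcomp n m G F

/-- Cup product `F ⌣ G := (-1)^m (Mu ∘₀ F) ∘ₘ G`, where `m, n` are the arities of `F, G`. -/
def cupFn (m n : ℕ) (Mu F G : (ℕ → L) → L) : (ℕ → L) → L :=
  sgn (m : ℤ) • pcomp m n (pcomp 0 m Mu F) G

/-! ### Signs -/

lemma sgn_add (a b : ℤ) : sgn (a + b) = sgn a * sgn b := by
  have h : ∀ z : ℤ, sgn z = (z.negOnePow : ℤ) := by
    intro z
    rcases Int.even_or_odd z with h | h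
    · rw [Int.negOnePow_even z h, sgn, (Int.natAbs_even.2 h).neg_one_pow]; rfl
    · rw [Int.negOnePow_odd z h, sgn, (Int.natAbs_odd.2 h).neg_one_pow]; rfl
  rw [h, h, h, Int.negOnePow_add, Units.val_mul]

lemma sgn_two_mul (a : ℤ) : sgn (2 * a) = 1 := by
  rw [sgn, Int.natAbs_mul, pow_mul]; simp

/-- Signs depend only on the parity of the exponent; `c` witnesses that the exponents differ by an
even number. -/
lemma sgn_congr {a b : ℤ} (c : ℤ) (h : a = b + 2 * c) : sgn a = sgn b := by
  rw [h, sgn_add, sgn_two_mul, mul_one]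

lemma sgn_neg_one : sgn (-1) = -1 := rfl

lemma sgn_zero : sgn 0 = 1 := rfl

/-! ### Linearity of composition -/

lemma toFn_congr {n : ℕ} (f : MultilinearMap K (fun _ : Fin n => L) L) {x y : ℕ → L}
    (h : ∀ k < n, x k = y k) : toFn f x = toFn f y :=
  congrArg f (funext fun a => h a.1 a.2)

/-- Composition at a genuine slot of a multilinear map is additive in the inserted function. -/
lemma exists_hom_right {m : ℕ} (f : MultilinearMap K (fun _ : Fin m => L) L) {i : ℕ} (hi : i < m)
    (p : ℕ) : ∃ φ : ((ℕ → L) → L) →+ ((ℕ → L) → L), ∀ G, pcomp i p (toFn f) G = φ G := by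
  refine ⟨AddMonoidHom.mk' (pcomp i p (toFn f)) ?_, fun _ => rfl⟩
  intro G H
  funext x
  have key : ∀ G : (ℕ → L) → L, pcomp i p (toFn f) G x = sgn ((i : ℤ) * ((p : ℤ) - 1)) •
      f (Function.update (fun a : Fin m => if a.1 < i then x a else x (a + p - 1)) ⟨i, hi⟩
        (G fun j => x (i + j))) := by
    intro G
    simp only [pcomp, toFn]
    congr 2
    funext a
    by_cases ha : a = ⟨i, hi⟩
    · subst ha; simp
    · have : a.1 ≠ i := fun h => ha (Fin.ext h)
      simp [Function.update_of_ne ha, this]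
  rw [Pi.add_apply, key, key, key, Pi.add_apply, f.map_update_add, smul_add]

lemma exists_hom_left (i p : ℕ) (G : (ℕ → L) → L) :
    ∃ φ : ((ℕ → L) → L) →+ ((ℕ → L) → L), ∀ F, pcomp i p F G = φ F :=
  ⟨AddMonoidHom.mk' (fun F => pcomp i p F G) fun F F' => by
    funext x; simp [pcomp, smul_add], fun _ => rfl⟩

lemma exists_tcomp_hom_right {m : ℕ} (f : MultilinearMap K (fun _ : Fin m => L) L)
    (p : ℕ) : ∃ φ : ((ℕ → L) → L) →+ ((ℕ → L) → L), ∀ G, tcomp m p (toFn f) G = φ G := by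
  refine ⟨AddMonoidHom.mk' (tcomp m p (toFn f)) ?_, fun _ => rfl⟩
  intro G H
  simp only [tcomp, ← Finset.sum_add_distrib]
  refine Finset.sum_congr rfl fun i hi => ?_
  obtain ⟨φ, hφ⟩ := exists_hom_right f (Finset.mem_range.1 hi) p
  simp [hφ]

lemma exists_tcomp_hom_left (m p : ℕ) (G : (ℕ → L) → L) :
    ∃ φ : ((ℕ → L) → L) →+ ((ℕ → L) → L), ∀ F, tcomp m p F G = φ F := by
  refine ⟨AddMonoidHom.mk' (fun F => tcomp m p F G) ?_, fun _ => rfl⟩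
  intro F F'
  simp only [tcomp, ← Finset.sum_add_distrib]
  refine Finset.sum_congr rfl fun i _ => ?_
  obtain ⟨φ, hφ⟩ := exists_hom_left i p G
  simp [hφ]

/-! ### Sequential and parallel composition laws -/

/-- Sequential composition law `(f ∘ᵢ g) ∘ᵢ₊ⱼ h = f ∘ᵢ (g ∘ⱼ h)`. -/
lemma pcomp_seq {m : ℕ} (f : MultilinearMap K (fun _ : Fin m => L) L) {i j n q : ℕ}
    (G H : (ℕ → L) → L) (hi : i < m) (hj : j < n) :
    pcomp (i + j) q (pcomp i n (toFn f) G) H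
      = pcomp i (n + q - 1) (toFn f) (pcomp j q G H) := by
  -- the unsigned composite `G ∘ⱼ H`
  let C : (ℕ → L) → L := fun x => G fun k =>
    if k < j then x k else if k = j then H (fun l => x (j + l)) else x (k + q - 1)
  have hC : pcomp j q G H = sgn ((j : ℤ) * ((q : ℤ) - 1)) • C := rfl
  obtain ⟨φ, hφ⟩ := exists_hom_right f hi (n + q - 1)
  rw [hC, hφ, map_zsmul, ← hφ]
  funext x
  simp only [pcomp, Pi.smul_apply, smul_smul, ← sgn_add]
  congr 1
  · congr 1
    push_cast [show 1 ≤ n + q by omega]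
    ring
  · congr 1
    funext k
    rcases lt_trichotomy k i with hk | hk | hk
    · simp [hk, show k < i + j by omega]
    · subst hk
      simp only [lt_irrefl, if_false, if_true, C]
      congr 1
      funext l
      rcases lt_trichotomy l j with hl | hl | hl
      · simp [hl]
      · subst hl; simp [add_assoc]
      · simp only [show ¬ k + l < k + j by omega, show k + l ≠ k + j by omega,
          show ¬ l < j by omega, show l ≠ j by omega, if_false]
        congr 1; omega
    · simp only [show ¬ k < i by omega, show k ≠ i by omega, if_false,
        show ¬ k + n - 1 < i + j by omega, show k + n - 1 ≠ i + j by omega]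
      congr 1; omega

/-- Parallel composition law. Only the function inserted further to the left has to ignore its
arguments beyond its arity, so only that one is required to come from a multilinear map. -/
lemma pcomp_par {i j n q : ℕ} (F G : (ℕ → L) → L)
    (h : MultilinearMap K (fun _ : Fin q => L) L) (hj : j < i) :
    pcomp j q (pcomp i n F G) (toFn h)
      = sgn (((n : ℤ) - 1) * ((q : ℤ) - 1)) • pcomp (i + q - 1) n (pcomp j q F (toFn h)) G := by
  funext x
  simp only [pcomp, Pi.smul_apply, smul_smul, ← sgn_add]
  congr 1
  · refine sgn_congr (-((n : ℤ) - 1) * ((q : ℤ) - 1)) ?_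
    push_cast [show 1 ≤ i + q by omega]
    ring
  · congr 1
    funext k
    rcases lt_trichotomy k j with hk | hk | hk
    · simp [hk, show k < i by omega, show k < i + q - 1 by omega]
    · subst hk
      simp only [hj, lt_irrefl, if_false, if_true]
      refine toFn_congr h fun l hl => ?_
      simp [show k + l < i + q - 1 by omega]
    · rcases lt_trichotomy k i with hk' | hk' | hk'
      · simp only [hk', if_true, show ¬ k < j by omega, show k ≠ j by omega, if_false,
          show k + q - 1 < i + q - 1 by omega]
      · subst hk'
        simp only [lt_irrefl, if_false, if_true, show ¬ k < j by omega, show k ≠ j by omega]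
        congr 1
        funext l
        simp only [show ¬ k + l < j by omega, show k + l ≠ j by omega, if_false]
        congr 1; omega
      · simp only [show ¬ k < i by omega, show k ≠ i by omega, if_false,
          show ¬ k < j by omega, show k ≠ j by omega, show ¬ k + n - 1 < j by omega,
          show k + n - 1 ≠ j by omega, show ¬ k + q - 1 < i + q - 1 by omega,
          show k + q - 1 ≠ i + q - 1 by omega]
        congr 1; omega

/-! ### The associator of the total composition -/

/-- The parallel part `∑_{j < i < m} (F ∘ᵢ G) ∘ⱼ H` of the composite `(F • G) • H`, in which `H` is
inserted to the left of `G`; `m, n, q` are the arities of `F, G, H`. -/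
def parSum (m n q : ℕ) (F G H : (ℕ → L) → L) : (ℕ → L) → L :=
  ∑ i ∈ Finset.range m, ∑ j ∈ Finset.range i, pcomp j q (pcomp i n F G) H

/-- The associator of the total composition consists of the parallel compositions alone. Truncated
subtraction in the arities is harmless: where it truncates, the sums concerned are empty. -/
lemma associator_eq {m n q : ℕ} (f : MultilinearMap K (fun _ : Fin m => L) L)
    (g : MultilinearMap K (fun _ : Fin n => L) L) (h : MultilinearMap K (fun _ : Fin q => L) L) :
    tcomp (m + n - 1) q (tcomp m n (toFn f) (toFn g)) (toFn h)
      = tcomp m (n + q - 1) (toFn f) (tcomp n q (toFn g) (toFn h))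
        + (parSum m n q (toFn f) (toFn g) (toFn h)
          + sgn (((n : ℤ) - 1) * ((q : ℤ) - 1)) • parSum m q n (toFn f) (toFn h) (toFn g)) := by
  have hL : tcomp (m + n - 1) q (tcomp m n (toFn f) (toFn g)) (toFn h)
      = ∑ i ∈ Finset.range m, ∑ j ∈ Finset.range (m + n - 1),
          pcomp j q (pcomp i n (toFn f) (toFn g)) (toFn h) := by
    rw [Finset.sum_comm, tcomp]
    refine Finset.sum_congr rfl fun j _ => ?_
    obtain ⟨φ, hφ⟩ := exists_hom_left j q (toFn h)
    simp only [hφ, tcomp, map_sum]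
  have hR : tcomp m (n + q - 1) (toFn f) (tcomp n q (toFn g) (toFn h))
      = ∑ i ∈ Finset.range m, ∑ j ∈ Finset.range n,
          pcomp (i + j) q (pcomp i n (toFn f) (toFn g)) (toFn h) := by
    rw [tcomp]
    refine Finset.sum_congr rfl fun i hi => ?_
    have hi := Finset.mem_range.1 hi
    obtain ⟨φ, hφ⟩ := exists_hom_right f hi (n + q - 1)
    rw [hφ, tcomp, map_sum]
    refine Finset.sum_congr rfl fun j hj => ?_
    rw [pcomp_seq f _ _ hi (Finset.mem_range.1 hj), hφ]
  have hP : sgn (((n : ℤ) - 1) * ((q : ℤ) - 1)) • parSum m q n (toFn f) (toFn h) (toFn g)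
      = ∑ i ∈ Finset.range m, ∑ k ∈ Finset.Ico (i + 1) m,
          pcomp (k + n - 1) q (pcomp i n (toFn f) (toFn g)) (toFn h) := by
    rw [parSum, Finset.smul_sum, Finset.sum_comm' (t' := Finset.range m)
      (s' := fun k => Finset.range k)]
    · refine Finset.sum_congr rfl fun k _ => ?_
      rw [Finset.smul_sum]
      refine Finset.sum_congr rfl fun i hi => ?_
      rw [pcomp_par _ _ g (Finset.mem_range.1 hi), smul_smul, ← sgn_add,
        sgn_congr (b := 0) (((n : ℤ) - 1) * ((q : ℤ) - 1)) (by ring), sgn_zero, one_smul]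
    · intro i k
      simp only [Finset.mem_range, Finset.mem_Ico]
      omega
  rw [hL, hR, hP, parSum, ← Finset.sum_add_distrib, ← Finset.sum_add_distrib]
  refine Finset.sum_congr rfl fun i hi => ?_
  have hi := Finset.mem_range.1 hi
  rw [show m + n - 1 = i + n + (m - (i + 1)) by omega, Finset.sum_range_add,
    Finset.sum_range_add, Finset.sum_Ico_eq_sum_range]
  have : ∀ j, i + 1 + j + n - 1 = i + n + j := fun j => by omega
  simp only [this]
  abel

/-! ### The derivation deviation -/

/-- Theorem on the first derivation deviation: in the endomorphism operad, the derivation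
deviation of the coboundary operator over the total composition,
`(dev_• ∂)(f ⊗ g) := ∂(f • g) - f • ∂g - (-1)^{|g|} ∂f • g`, satisfies
`(-1)^n (dev_• ∂)(f ⊗ g) = f ⌣ g - (-1)^{mn} g ⌣ f`. -/
theorem endop_first_derivation_deviation {m n : ℕ} (μ : MultilinearMap K (fun _ : Fin 2 => L) L)
    (f : MultilinearMap K (fun _ : Fin m => L) L) (g : MultilinearMap K (fun _ : Fin n => L) L) :
    sgn (n : ℤ) •
        (gbr (m + n - 1) 2 (tcomp m n (toFn f) (toFn g)) (toFn μ) -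
          tcomp m (n + 1) (toFn f) (gbr n 2 (toFn g) (toFn μ)) -
          sgn ((n : ℤ) - 1) • tcomp (m + 1) n (gbr m 2 (toFn f) (toFn μ)) (toFn g)) =
      cupFn m n (toFn μ) (toFn f) (toFn g) -
        sgn ((m : ℤ) * (n : ℤ)) • cupFn n m (toFn μ) (toFn g) (toFn f) := by
  have h1 := associator_eq f g μ
  have h2 := associator_eq f μ g
  have h3 := associator_eq μ f g
  rw [show n + 2 - 1 = n + 1 by omega] at h1
  rw [show m + 2 - 1 = m + 1 by omega, show 2 + n - 1 = n + 1 by omega] at h2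
  rw [show 2 + m - 1 = m + 1 by omega] at h3
  -- If `m = 0` then `m + n - 1` need not be the arity of `f • g`, but `f • g = 0`.
  have hs : sgn ((((m + n - 1 : ℕ) : ℤ) - 1) * (((2 : ℕ) : ℤ) - 1)) •
        tcomp 2 (m + n - 1) (toFn μ) (tcomp m n (toFn f) (toFn g))
      = sgn ((m : ℤ) + n) • tcomp 2 (m + n - 1) (toFn μ) (tcomp m n (toFn f) (toFn g)) := by
    rcases Nat.eq_zero_or_pos m with rfl | hm
    · obtain ⟨φ, hφ⟩ := exists_tcomp_hom_right μ (0 + n - 1)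
      have h0 : tcomp 0 n (toFn f) (toFn g) = 0 := rfl
      rw [h0, hφ, map_zero, smul_zero, smul_zero]
    · congr 1
      refine sgn_congr (-1) ?_
      push_cast [show 1 ≤ m + n by omega]
      ring
  have hf : tcomp m (n + 1) (toFn f) (gbr n 2 (toFn g) (toFn μ))
      = tcomp m (n + 1) (toFn f) (tcomp n 2 (toFn g) (toFn μ))
        - sgn ((n : ℤ) - 1) • tcomp m (n + 1) (toFn f) (tcomp 2 n (toFn μ) (toFn g)) := by
    obtain ⟨φ, hφ⟩ := exists_tcomp_hom_right f (n + 1)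
    rw [hφ, hφ, hφ, gbr, map_sub, map_zsmul]
    norm_num
  have hg : tcomp (m + 1) n (gbr m 2 (toFn f) (toFn μ)) (toFn g)
      = tcomp (m + 1) n (tcomp m 2 (toFn f) (toFn μ)) (toFn g)
        - sgn ((m : ℤ) - 1) • tcomp (m + 1) n (tcomp 2 m (toFn μ) (toFn f)) (toFn g) := by
    obtain ⟨φ, hφ⟩ := exists_tcomp_hom_left (m + 1) n (toFn g)
    rw [hφ, hφ, hφ, gbr, map_sub, map_zsmul]
    norm_num
  have hpar : ∀ {a b : ℕ} (F G : (ℕ → L) → L),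
      parSum 2 a b (toFn μ) F G = pcomp 0 b (pcomp 1 a (toFn μ) F) G := by
    intro a b F G
    simp [parSum, Finset.sum_range_succ]
  have hfg : cupFn m n (toFn μ) (toFn f) (toFn g)
      = (sgn (m : ℤ) * sgn (((m : ℤ) - 1) * ((n : ℤ) - 1))) •
        parSum 2 n m (toFn μ) (toFn g) (toFn f) := by
    rw [hpar, pcomp_par _ _ f one_pos, cupFn, smul_smul, ← sgn_add, ← sgn_add,
      Nat.add_sub_cancel_left]
    congr 1
    exact sgn_congr (-(((m : ℤ) - 1) * ((n : ℤ) - 1))) (by ring)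
  have hgf : sgn ((m : ℤ) * (n : ℤ)) • cupFn n m (toFn μ) (toFn g) (toFn f)
      = -(sgn (m : ℤ) • parSum 2 m n (toFn μ) (toFn f) (toFn g)) := by
    rw [hpar, pcomp_par _ _ g one_pos, cupFn, smul_smul, smul_smul, ← sgn_add, ← sgn_add,
      Nat.add_sub_cancel_left, ← neg_one_smul ℤ, smul_smul, ← sgn_neg_one, ← sgn_add]
    congr 1
    exact sgn_congr (n : ℤ) (by ring)
  rw [hfg, hgf, gbr, hs, hf, hg, h1, h2, h3]
  have e1 : sgn ((n : ℤ) - 1) = - sgn n := by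
    rw [sub_eq_add_neg, sgn_add, sgn_neg_one, mul_neg_one]
  have e2 : sgn ((m : ℤ) - 1) = - sgn m := by
    rw [sub_eq_add_neg, sgn_add, sgn_neg_one, mul_neg_one]
  have e3 : sgn (n : ℤ) * sgn n = 1 := by
    rw [← sgn_add, ← two_mul, sgn_two_mul]
  have e4 : sgn (((n : ℤ) - 1) * (((2 : ℕ) : ℤ) - 1)) = - sgn n := by
    rw [← e1]; congr 1; push_cast; ring
  have e5 : sgn ((((2 : ℕ) : ℤ) - 1) * ((n : ℤ) - 1)) = - sgn n := by
    rw [← e1]; congr 1; push_cast; ring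
  rw [e1, e2, e4, e5, sgn_add]
  -- All signs are now polynomial in `sgn m`, `sgn n` and `(-1)^{|f||g|}`, with `(sgn n)² = 1`.
  generalize sgn (((m : ℤ) - 1) * ((n : ℤ) - 1)) = c
  generalize sgn (n : ℤ) = b at *
  generalize sgn (m : ℤ) = a
  clear hfg hgf hs hf hg h1 h2 h3
  have e6 : b ^ 2 = 1 := by rw [sq, e3]
  have e7 : b ^ 3 = b := by rw [pow_succ, e6, one_mul]
  match_scalars <;> ring_nf <;> simp [e6, e7]
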